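/- Let A ∈ ℝ^{n×n}, B ∈ ℝ^{n×m}, let Q ∈ ℝ^{n×n}, R ∈ ℝ^{m×m} be symmetric positive semidefinite, let P ∈ ℝ^{n×n} be symmetric, K ∈ ℝ^{m×n}, and let i ≥ 1. Define A_j := A^j, B_j := ∑_{l=0}^{j−1} A^l B, Q_i := ∑_{j=0}^{i−1} A_jᵀ Q A_j, S_i := ∑_{j=1}^{i−1} A_jᵀ Q B_j, R_i := i·R + ∑_{j=1}^{i−1} B_jᵀ Q B_j. If (A_i + B_i K)ᵀ P (A_i + B_i K) − P + Q_i + S_i K + Kᵀ S_iᵀ + Kᵀ R_i K ⪯ 0, then for every x ∈ ℝ^n, with x⁺ := (A_i + B_i K) x: x⁺ᵀ P x⁺ − xᵀ P x ≤ − ∑_{j=0}^{i−1} [ ((A_j + B_j K) x)ᵀ Q ((A_j + B_j K) x) + (K x)ᵀ R (K x) ]. -/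

import Mathlib

open Matrix

/-- `B_j := ∑_{l=0}^{j−1} A^l B` (so `B_0 = 0`). -/
noncomputable def Bmat {n m : ℕ} (A : Matrix (Fin n) (Fin n) ℝ)
    (B : Matrix (Fin n) (Fin m) ℝ) (j : ℕ) : Matrix (Fin n) (Fin m) ℝ :=
  ∑ l ∈ Finset.range j, A ^ l * B

/-- `Q_i := ∑_{j=0}^{i−1} A_jᵀ Q A_j`. -/
noncomputable def Qmat {n : ℕ} (A Q : Matrix (Fin n) (Fin n) ℝ) (i : ℕ) :
    Matrix (Fin n) (Fin n) ℝ :=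
  ∑ j ∈ Finset.range i, (A ^ j)ᵀ * Q * A ^ j

/-- `S_i := ∑_{j=1}^{i−1} A_jᵀ Q B_j`. -/
noncomputable def Smat {n m : ℕ} (A : Matrix (Fin n) (Fin n) ℝ)
    (B : Matrix (Fin n) (Fin m) ℝ) (Q : Matrix (Fin n) (Fin n) ℝ) (i : ℕ) :
    Matrix (Fin n) (Fin m) ℝ :=
  ∑ j ∈ Finset.Ico 1 i, (A ^ j)ᵀ * Q * Bmat A B j

/-- `R_i := i·R + ∑_{j=1}^{i−1} B_jᵀ Q B_j`. -/
noncomputable def Rmat {n m : ℕ} (A : Matrix (Fin n) (Fin n) ℝ)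
    (B : Matrix (Fin n) (Fin m) ℝ) (Q : Matrix (Fin n) (Fin n) ℝ)
    (R : Matrix (Fin m) (Fin m) ℝ) (i : ℕ) : Matrix (Fin m) (Fin m) ℝ :=
  i • R + ∑ j ∈ Finset.Ico 1 i, (Bmat A B j)ᵀ * Q * Bmat A B j

/-! Since `Q` is symmetric, `(A_j + B_j K)ᵀ Q (A_j + B_j K)` expands into `A_jᵀ Q A_j`,
`(A_jᵀ Q B_j) K` and its transpose, and `Kᵀ (B_jᵀ Q B_j) K`. Summed over `j < i`, with
`Kᵀ R K` added at each step, these give `Q_i + S_i K + Kᵀ S_iᵀ + Kᵀ R_i K`; the terms at `j = 0`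
missing from `S_i` and `R_i` vanish because `B_0 = 0`. Hence this matrix represents
the cumulated stage cost as a quadratic form in `x`, and the claimed decrease is the matrix
inequality evaluated at `x`. -/

theorem sum_Ico_one_eq_sum_range {M : Type*} [AddCommMonoid M] {f : ℕ → M} (hf : f 0 = 0)
    (n : ℕ) : ∑ j ∈ Finset.Ico 1 n, f j = ∑ j ∈ Finset.range n, f j := by
  rcases n.eq_zero_or_pos with rfl | hn
  · simp
  · rw [Finset.sum_range_eq_add_Ico f hn, hf, zero_add]

section NonUnitalCommSemiring

variable {α ι κ μ ν : Type*} [NonUnitalCommSemiring α]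

theorem dotProduct_transpose_mul_mul_mulVec [Fintype ι] [Fintype κ] [Fintype μ] [Fintype ν]
    (L : Matrix κ ι α) (M : Matrix κ μ α) (N : Matrix μ ν α) (x : ι → α) (y : ν → α) :
    x ⬝ᵥ ((Lᵀ * M * N) *ᵥ y) = (L *ᵥ x) ⬝ᵥ (M *ᵥ (N *ᵥ y)) := by
  rw [← mulVec_mulVec, ← mulVec_mulVec, dotProduct_mulVec, vecMul_transpose]

theorem transpose_mul_mul_add_mul [Fintype κ] [Fintype μ] {Q : Matrix κ κ α} (hQ : Q.IsSymm)
    (X : Matrix κ ι α) (Y : Matrix κ μ α) (K : Matrix μ ι α) :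
    (X + Y * K)ᵀ * Q * (X + Y * K) =
      Xᵀ * Q * X + Xᵀ * Q * Y * K + Kᵀ * (Xᵀ * Q * Y)ᵀ + Kᵀ * (Yᵀ * Q * Y) * K := by
  simp only [transpose_add, transpose_mul, transpose_transpose, hQ.eq, Matrix.add_mul,
    Matrix.mul_add, Matrix.mul_assoc]
  abel

end NonUnitalCommSemiring

section HeldInput

variable {n m : ℕ} (A : Matrix (Fin n) (Fin n) ℝ) (B : Matrix (Fin n) (Fin m) ℝ)

theorem Bmat_zero : Bmat A B 0 = 0 :=
  Finset.sum_range_zero _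

theorem Smat_eq_sum_range (Q : Matrix (Fin n) (Fin n) ℝ) (i : ℕ) :
    Smat A B Q i = ∑ j ∈ Finset.range i, (A ^ j)ᵀ * Q * Bmat A B j :=
  sum_Ico_one_eq_sum_range (by rw [Bmat_zero, Matrix.mul_zero]) i

theorem Rmat_eq_sum_range (Q : Matrix (Fin n) (Fin n) ℝ) (R : Matrix (Fin m) (Fin m) ℝ) (i : ℕ) :
    Rmat A B Q R i = ∑ j ∈ Finset.range i, (R + (Bmat A B j)ᵀ * Q * Bmat A B j) := by
  rw [Rmat, sum_Ico_one_eq_sum_range (by rw [Bmat_zero, Matrix.mul_zero]),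
    Finset.sum_add_distrib, Finset.sum_const, Finset.card_range]

theorem Qmat_add_Smat_mul_add_Rmat_eq_sum {Q : Matrix (Fin n) (Fin n) ℝ} (hQ : Q.IsSymm)
    (R : Matrix (Fin m) (Fin m) ℝ) (K : Matrix (Fin m) (Fin n) ℝ) (i : ℕ) :
    Qmat A Q i + Smat A B Q i * K + Kᵀ * (Smat A B Q i)ᵀ + Kᵀ * Rmat A B Q R i * K =
      ∑ j ∈ Finset.range i,
        ((A ^ j + Bmat A B j * K)ᵀ * Q * (A ^ j + Bmat A B j * K) + Kᵀ * R * K) := by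
  simp only [Qmat, Smat_eq_sum_range, Rmat_eq_sum_range, transpose_sum, Matrix.sum_mul,
    Matrix.mul_sum, ← Finset.sum_add_distrib]
  refine Finset.sum_congr rfl fun j _ => ?_
  rw [transpose_mul_mul_add_mul hQ, Matrix.mul_add, Matrix.add_mul]
  abel

theorem dotProduct_Qmat_add_Smat_mul_add_Rmat_mulVec {Q : Matrix (Fin n) (Fin n) ℝ}
    (hQ : Q.IsSymm) (R : Matrix (Fin m) (Fin m) ℝ) (K : Matrix (Fin m) (Fin n) ℝ) (i : ℕ)
    (x : Fin n → ℝ) :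
    x ⬝ᵥ ((Qmat A Q i + Smat A B Q i * K + Kᵀ * (Smat A B Q i)ᵀ +
        Kᵀ * Rmat A B Q R i * K) *ᵥ x) =
      ∑ j ∈ Finset.range i,
        (((A ^ j + Bmat A B j * K) *ᵥ x) ⬝ᵥ (Q *ᵥ ((A ^ j + Bmat A B j * K) *ᵥ x)) +
          (K *ᵥ x) ⬝ᵥ (R *ᵥ (K *ᵥ x))) := by
  simp only [Qmat_add_Smat_mul_add_Rmat_eq_sum A B hQ, sum_mulVec, dotProduct_sum, add_mulVec,
    dotProduct_add, dotProduct_transpose_mul_mul_mulVec]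

end HeldInput

theorem quadratic_matrix_inequality_cost_decrease_general {n m : ℕ}
    (A : Matrix (Fin n) (Fin n) ℝ) (B : Matrix (Fin n) (Fin m) ℝ)
    {Q : Matrix (Fin n) (Fin n) ℝ} (hQ : Q.IsSymm) (R : Matrix (Fin m) (Fin m) ℝ)
    (P : Matrix (Fin n) (Fin n) ℝ) (K : Matrix (Fin m) (Fin n) ℝ) (i : ℕ)
    (hQMI : (-((A ^ i + Bmat A B i * K)ᵀ * P * (A ^ i + Bmat A B i * K) - P +
        Qmat A Q i + Smat A B Q i * K + Kᵀ * (Smat A B Q i)ᵀ +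
        Kᵀ * Rmat A B Q R i * K)).PosSemidef)
    (x : Fin n → ℝ) :
    ((A ^ i + Bmat A B i * K) *ᵥ x) ⬝ᵥ (P *ᵥ ((A ^ i + Bmat A B i * K) *ᵥ x)) -
        x ⬝ᵥ (P *ᵥ x) ≤
      -∑ j ∈ Finset.range i,
          (((A ^ j + Bmat A B j * K) *ᵥ x) ⬝ᵥ (Q *ᵥ ((A ^ j + Bmat A B j * K) *ᵥ x)) +
            (K *ᵥ x) ⬝ᵥ (R *ᵥ (K *ᵥ x))) := by
  rw [← dotProduct_Qmat_add_Smat_mul_add_Rmat_mulVec A B hQ,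
    ← dotProduct_transpose_mul_mul_mulVec]
  have qmi_at_x := hQMI.dotProduct_mulVec_nonneg x
  simp only [star_trivial, neg_mulVec, add_mulVec, sub_mulVec, dotProduct_neg, dotProduct_add,
    dotProduct_sub] at qmi_at_x ⊢
  linarith

/-- **Terminal cost decrease from the quadratic matrix inequality.**
If `(A_i + B_i K)ᵀ P (A_i + B_i K) − P + Q_i + S_i K + Kᵀ S_iᵀ + Kᵀ R_i K ⪯ 0`
(stated as: its negative is positive semidefinite), then along `x⁺ = (A_i + B_i K) x` the
quadratic cost `xᵀ P x` decreases by at least the cumulated stage cost of `i` held-input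
steps under the feedback `u = K x`. -/
theorem quadratic_matrix_inequality_cost_decrease {n m : ℕ}
    (A : Matrix (Fin n) (Fin n) ℝ) (B : Matrix (Fin n) (Fin m) ℝ)
    (Q : Matrix (Fin n) (Fin n) ℝ) (R : Matrix (Fin m) (Fin m) ℝ)
    (hQ : Q.PosSemidef) (hR : R.PosSemidef)
    (P : Matrix (Fin n) (Fin n) ℝ) (hP : P.IsSymm)
    (K : Matrix (Fin m) (Fin n) ℝ) (i : ℕ) (hi : 1 ≤ i)
    (hQMI : (-((A ^ i + Bmat A B i * K)ᵀ * P * (A ^ i + Bmat A B i * K) - P +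
        Qmat A Q i + Smat A B Q i * K + Kᵀ * (Smat A B Q i)ᵀ +
        Kᵀ * Rmat A B Q R i * K)).PosSemidef) :
    ∀ x : Fin n → ℝ,
      ((A ^ i + Bmat A B i * K) *ᵥ x) ⬝ᵥ (P *ᵥ ((A ^ i + Bmat A B i * K) *ᵥ x)) -
          x ⬝ᵥ (P *ᵥ x) ≤
        -∑ j ∈ Finset.range i,
            (((A ^ j + Bmat A B j * K) *ᵥ x) ⬝ᵥ (Q *ᵥ ((A ^ j + Bmat A B j * K) *ᵥ x)) +
              (K *ᵥ x) ⬝ᵥ (R *ᵥ (K *ᵥ x))) := by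
  exact quadratic_matrix_inequality_cost_decrease_general A B
    (isHermitian_iff_isSymm.mp hQ.isHermitian) R P K i hQMI
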